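/- A set of ordered unranked Σ-trees is regular (i.e., equal to L(A) for some nondeterministic unranked tree automaton A) if and only if it is definable by an MSO sentence. -/

import Mathlib

/-!
A valuation of the variables of a formula is a decoration of the nodes of the tree, and the formula
turns into a set of decorated trees. Such a set is called recognizable if it is decided by a finite
deterministic automaton running bottom-up on the first-child / next-sibling encoding, a binary tree
in which no condition on words is needed. Recognizable sets are closed under complement,
intersection and, by the subset construction, projection, and first-order variables are set
variables marking exactly one node; hence every formula is recognizable. To turn a recognizable set
into the language of an unranked automaton, the state of a node records how its subtree transforms
the state of the forest to its right. The state of a forest is then a fold over the word of the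
states of its roots, which is a regular condition, and Kleene's theorem expresses it by a regular
expression.

Conversely, a run is made locally verifiable by also attaching to every node the language that the
word of the states of the node and of its right siblings has to belong to. It is a left quotient of
one of the finitely many horizontal languages, so there are finitely many possibilities, and an MSO
sentence can guess the states and the quotients and check them along the first-child and
next-sibling relations.
-/

namespace UnrankedTrees

/-! ### Unranked trees: tree domains and ordered unranked Σ-trees.
Nodes are finite strings over ℕ; a tree domain is a finite prefix-closed set
of nodes such that `s ++ [i] ∈ D` implies `s ++ [j] ∈ D` for all `j < i`. -/

abbrev Node : Type := List ℕ

/-- An ordered unranked tree over alphabet `A`: a tree domain with a labeling. -/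
structure UTree (A : Type) where
  dom : Finset Node
  nil_mem : ([] : Node) ∈ dom
  prefix_closed : ∀ ⦃s t : Node⦄, s ∈ dom → t <+: s → t ∈ dom
  sib_closed : ∀ ⦃s : Node⦄ ⦃i j : ℕ⦄, s ++ [i] ∈ dom → j < i → s ++ [j] ∈ dom
  label : Node → A

namespace UTree

variable {A : Type}

/-- The child relation `≺_ch`. -/
def childR (T : UTree A) (s t : Node) : Prop :=
  s ∈ T.dom ∧ t ∈ T.dom ∧ ∃ i : ℕ, t = s ++ [i]

/-- The descendant-or-self relation `≺*_ch` (the prefix relation). -/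
def descR (T : UTree A) (s t : Node) : Prop :=
  s ∈ T.dom ∧ t ∈ T.dom ∧ s <+: t

/-- The next-sibling relation `≺_ns`. -/
def nsR (T : UTree A) (s t : Node) : Prop :=
  s ∈ T.dom ∧ t ∈ T.dom ∧ ∃ (u : Node) (i : ℕ), s = u ++ [i] ∧ t = u ++ [i + 1]

/-- The sibling ordering `≺*_ns` (reflexive-transitive closure of next-sibling). -/
def sibR (T : UTree A) (s t : Node) : Prop :=
  s ∈ T.dom ∧ t ∈ T.dom ∧ ∃ (u : Node) (i j : ℕ), s = u ++ [i] ∧ t = u ++ [j] ∧ i ≤ j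

/-- The first-child relation `≺_fc`. -/
def firstChildR (T : UTree A) (s t : Node) : Prop :=
  s ∈ T.dom ∧ t ∈ T.dom ∧ t = s ++ [0]

/-- The number of children of a node. -/
noncomputable def childCount (T : UTree A) (s : Node) : ℕ :=
  Set.ncard {i : ℕ | s ++ [i] ∈ T.dom}

/-- The list of children of a node `s`, in sibling order: `s·0, …, s·(n-1)`. -/
noncomputable def childrenList (T : UTree A) (s : Node) : List Node :=
  (List.range (T.childCount s)).map fun i => s ++ [i]

/-- `s` is a leaf of `T`. -/
def isLeaf (T : UTree A) (s : Node) : Prop :=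
  s ∈ T.dom ∧ ∀ i : ℕ, s ++ [i] ∉ T.dom

/-- `s` has no next sibling in `T` (the root also counts as "last"). -/
def isLast (T : UTree A) (s : Node) : Prop :=
  s = [] ∨ ∃ (u : Node) (i : ℕ), s = u ++ [i] ∧ u ++ [i + 1] ∉ T.dom

end UTree

/-! ### MSO over ordered unranked trees.
First-order variables and monadic second-order variables are indexed by ℕ.
First-order quantifiers range over the nodes of the tree, set quantifiers over
sets of nodes of the tree. -/

inductive MSO (A : Type) : Type where
  | eq : ℕ → ℕ → MSO A
  | desc : ℕ → ℕ → MSO A               -- x ≺*_ch y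
  | sib : ℕ → ℕ → MSO A                -- x ≺*_ns y
  | lab : A → ℕ → MSO A                -- P_a(x)
  | mem : ℕ → ℕ → MSO A                -- X(x)
  | not : MSO A → MSO A
  | and : MSO A → MSO A → MSO A
  | exFO : ℕ → MSO A → MSO A
  | exSO : ℕ → MSO A → MSO A

namespace MSO

variable {A : Type}

def Sat (T : UTree A) (v : ℕ → Node) (V : ℕ → Set Node) : MSO A → Prop
  | .eq x y => v x = v y
  | .desc x y => T.descR (v x) (v y)
  | .sib x y => T.sibR (v x) (v y)
  | .lab a x => v x ∈ T.dom ∧ T.label (v x) = a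
  | .mem X x => v x ∈ V X
  | .not φ => ¬ Sat T v V φ
  | .and φ ψ => Sat T v V φ ∧ Sat T v V ψ
  | .exFO n φ => ∃ s ∈ T.dom, Sat T (Function.update v n s) V φ
  | .exSO n φ => ∃ S : Set Node, S ⊆ ↑T.dom ∧ Sat T v (Function.update V n S) φ

/-- `φ`, as a sentence, defines the set `L` of trees.  (Quantifying over all
valuations forces the truth value to be independent of the valuation, i.e.
`φ` behaves as a sentence.) -/
def DefinesB (φ : MSO A) (L : Set (UTree A)) : Prop :=
  ∀ (T : UTree A) (v : ℕ → Node) (V : ℕ → Set Node), T ∈ L ↔ Sat T v V φ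

/-- `φ`, as a formula whose only free variable is the first-order variable `0`,
defines the unary query `Q`. -/
def DefinesU (φ : MSO A) (Q : UTree A → Set Node) : Prop :=
  ∀ (T : UTree A) (v : ℕ → Node) (V : ℕ → Set Node) (s : Node), s ∈ T.dom →
    (s ∈ Q T ↔ Sat T (Function.update v 0 s) V φ)

end MSO

/-! ### Nondeterministic unranked tree automata (NUTA). -/

/-- A nondeterministic unranked tree automaton: finitely many states, final
states `F`, and `δ(q,a)` a regular language over the states, given by a
regular expression. -/
structure NUTA (A : Type) where
  Q : Type
  fintype_Q : Fintype Q
  F : Set Q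
  δ : Q → A → RegularExpression Q

namespace NUTA

variable {A : Type}

/-- `ρ` is a run of `N` on `T`: at every node `s` labelled `a` with children
`s·0, …, s·(n-1)`, the string `ρ(s·0) ⋯ ρ(s·(n-1))` lies in `δ(ρ(s), a)`. -/
def IsRun (N : NUTA A) (T : UTree A) (ρ : Node → N.Q) : Prop :=
  ∀ s ∈ T.dom, ((T.childrenList s).map ρ) ∈ (N.δ (ρ s) (T.label s)).matches'

/-- A tree is accepted if some run puts the root in a final state. -/
def Accepts (N : NUTA A) (T : UTree A) : Prop :=
  ∃ ρ : Node → N.Q, N.IsRun T ρ ∧ ρ [] ∈ N.F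

end NUTA

/-- A set of unranked trees is regular if it is the language of some NUTA. -/
def RegularLang {A : Type} (L : Set (UTree A)) : Prop :=
  ∃ N : NUTA A, ∀ T : UTree A, N.Accepts T ↔ T ∈ L

/-! ### Kleene's theorem -/

section Kleene

open Language
open scoped Computability

variable {α : Type*} {L M : Language α}

theorem mem_singleton_iff {u w : List α} : w ∈ ({u} : Language α) ↔ w = u := Iff.rfl

theorem leftQuotient_singleton_mul (a : α) [Decidable ([] ∈ L)] :
    (L * M).leftQuotient [a] =
      L.leftQuotient [a] * M + if [] ∈ L then M.leftQuotient [a] else 0 := by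
  ext y
  simp only [mem_leftQuotient, mem_add, mem_mul, List.singleton_append]
  constructor
  · rintro ⟨_ | ⟨b, u⟩, hu, v, hv, h⟩
    · rw [List.nil_append] at h
      subst h
      simpa [hu, mem_leftQuotient] using Or.inr hv
    · obtain ⟨rfl, rfl⟩ := List.cons.inj h
      exact Or.inl ⟨u, hu, v, hv, rfl⟩
  · rintro (⟨u, hu, v, hv, rfl⟩ | h)
    · exact ⟨a :: u, hu, v, hv, rfl⟩
    · split_ifs at h with hε
      · exact ⟨[], hε, a :: y, h, rfl⟩
      · exact absurd h (notMem_zero y)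

theorem leftQuotient_singleton_kstar (a : α) :
    L∗.leftQuotient [a] = L.leftQuotient [a] * L∗ := by
  ext y
  simp only [mem_leftQuotient, mem_mul, List.singleton_append]
  constructor
  · rw [mem_kstar_iff_exists_nonempty]
    rintro ⟨_ | ⟨_ | ⟨b, u⟩, W⟩, hy, hW⟩
    · simp at hy
    · simp at hW
    · obtain ⟨rfl, rfl⟩ := List.cons.inj hy
      exact ⟨u, (hW _ List.mem_cons_self).1, W.flatten,
        join_mem_kstar fun w hw => (hW w (List.mem_cons_of_mem _ hw)).1, rfl⟩
  · rintro ⟨u, hu, v, hv, rfl⟩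
    rw [← one_add_self_mul_kstar_eq_kstar]
    exact Or.inr (append_mem_mul (a := a :: u) hu hv)

theorem isRegular_of_mem_finite {F : Set (Language α)} (hF : F.Finite) (hL : L ∈ F)
    (hclosed : ∀ K ∈ F, ∀ a, K.leftQuotient [a] ∈ F) : L.IsRegular := by
  refine .of_finite_range_leftQuotient (hF.subset ?_)
  rintro _ ⟨x, rfl⟩
  induction x using List.reverseRecOn with
  | nil => exact hL
  | append_singleton x a ih =>
    rw [leftQuotient_append]
    exact hclosed _ ih a

-- The submonoid consists of the unions of left quotients of `L`.
theorem exists_finite_addSubmonoid_leftQuotient_mem (hL : L.IsRegular) :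
    ∃ F : AddSubmonoid (Language α), (F : Set (Language α)).Finite ∧ L ∈ F ∧
      ∀ K ∈ F, ∀ a, K.leftQuotient [a] ∈ F := by
  refine ⟨{
    carrier := sSup '' 𝒫 Set.range L.leftQuotient
    zero_mem' := ⟨∅, Set.empty_subset _, sSup_empty⟩
    add_mem' := ?_ }, hL.finite_range_leftQuotient.finite_subsets.image _, ?_, ?_⟩
  · rintro _ _ ⟨S, hS, rfl⟩ ⟨S', hS', rfl⟩
    exact ⟨S ∪ S', Set.union_subset hS hS', sSup_union⟩
  · exact ⟨{L}, by simpa using ⟨[], leftQuotient_nil L⟩, sSup_singleton⟩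
  · rintro _ ⟨S, hS, rfl⟩ a
    refine ⟨(·.leftQuotient [a]) '' S, ?_, ?_⟩
    · rintro _ ⟨K, hK, rfl⟩
      obtain ⟨x, rfl⟩ := hS hK
      exact ⟨x ++ [a], leftQuotient_append L x [a]⟩
    · rw [sSup_image]
      ext y
      simp [mem_leftQuotient, mem_iSup]
      rfl

theorem isRegular_zero : (0 : Language α).IsRegular :=
  isRegular_of_mem_finite (Set.finite_singleton 0) rfl (by rintro _ rfl a; rfl)

theorem isRegular_one : (1 : Language α).IsRegular := by
  refine isRegular_of_mem_finite (F := {1, 0}) (Set.toFinite _) (by simp) ?_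
  rintro _ (rfl | rfl) a <;> right
  · ext y; simp [mem_leftQuotient, mem_one]
  · rfl

theorem isRegular_singleton (a : α) : ({[a]} : Language α).IsRegular := by
  refine isRegular_of_mem_finite (F := {{[a]}, 1, 0}) (Set.toFinite _) (by simp) ?_
  rintro _ (rfl | rfl | rfl) b
  · right
    by_cases hb : b = a
    · left; ext y; simp [mem_leftQuotient, mem_singleton_iff, hb, mem_one]
    · right; ext y; simp [mem_leftQuotient, mem_singleton_iff, hb, notMem_zero]
  · right; right; ext y; simp [mem_leftQuotient, mem_one]
  · right; right; rfl

theorem isRegular_mul (hL : L.IsRegular) (hM : M.IsRegular) : (L * M).IsRegular := by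
  classical
  obtain ⟨F, hF, hLF, hFa⟩ := exists_finite_addSubmonoid_leftQuotient_mem hL
  obtain ⟨G, hG, hMG, hGa⟩ := exists_finite_addSubmonoid_leftQuotient_mem hM
  refine isRegular_of_mem_finite (hF.image2 (fun K K' => K * M + K') hG)
    ⟨L, hLF, 0, G.zero_mem, add_zero _⟩ ?_
  rintro _ ⟨K, hK, K', hK', rfl⟩ a
  refine ⟨_, hFa K hK a, (if [] ∈ K then M.leftQuotient [a] else 0) + K'.leftQuotient [a],
    G.add_mem ?_ (hGa K' hK' a), ?_⟩
  · split_ifs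
    exacts [hGa M hMG a, G.zero_mem]
  · beta_reduce
    rw [← add_assoc, ← leftQuotient_singleton_mul]
    rfl

theorem isRegular_kstar (hL : L.IsRegular) : L∗.IsRegular := by
  classical
  obtain ⟨F, hF, hLF, hFa⟩ := exists_finite_addSubmonoid_leftQuotient_mem hL
  refine isRegular_of_mem_finite ((hF.image (· * L∗)).insert L∗) (Set.mem_insert _ _) ?_
  rintro _ (rfl | ⟨K, hK, rfl⟩) a <;> right
  · exact ⟨_, hFa L hLF a, (leftQuotient_singleton_kstar a).symm⟩
  · refine ⟨K.leftQuotient [a] + if [] ∈ K then L.leftQuotient [a] else 0,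
      F.add_mem (hFa K hK a) ?_, ?_⟩
    · split_ifs
      exacts [hFa L hLF a, F.zero_mem]
    · simp only [leftQuotient_singleton_mul, leftQuotient_singleton_kstar, add_mul, ite_mul,
        zero_mul]

theorem isRegular_matches' (r : RegularExpression α) : r.matches'.IsRegular := by
  induction r with
  | zero => exact isRegular_zero
  | epsilon => exact isRegular_one
  | char a => exact isRegular_singleton a
  | plus r s hr hs => exact hr.add hs
  | comp r s hr hs => exact isRegular_mul hr hs
  | star r hr => exact isRegular_kstar hr

/-- A rational language: one denoted by a regular expression. -/
def IsRational (L : Language α) : Prop := ∃ r : RegularExpression α, r.matches' = L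

namespace IsRational

theorem zero : IsRational (0 : Language α) := ⟨0, rfl⟩

theorem one : IsRational (1 : Language α) := ⟨1, rfl⟩

theorem singleton (a : α) : IsRational ({[a]} : Language α) := ⟨.char a, rfl⟩

theorem add : IsRational L → IsRational M → IsRational (L + M) := by
  rintro ⟨r, rfl⟩ ⟨s, rfl⟩
  exact ⟨r + s, rfl⟩

theorem mul : IsRational L → IsRational M → IsRational (L * M) := by
  rintro ⟨r, rfl⟩ ⟨s, rfl⟩
  exact ⟨r * s, rfl⟩

theorem kstar : IsRational L → IsRational L∗ := by
  rintro ⟨r, rfl⟩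
  exact ⟨r.star, rfl⟩

theorem sum {ι : Type*} {s : Finset ι} {L : ι → Language α} (h : ∀ i ∈ s, IsRational (L i)) :
    IsRational (∑ i ∈ s, L i) :=
  Finset.sum_induction L IsRational (fun _ _ => add) zero h

end IsRational

theorem nil_notMem_mul_left (hL : [] ∉ L) : [] ∉ L * M := by
  rintro ⟨u, hu, v, -, h⟩
  obtain ⟨rfl, -⟩ := List.append_eq_nil_iff.1 h
  exact hL hu

-- Gaussian elimination: Arden's lemma solves the equation of one unknown, which is then substituted
-- into the others.
theorem isRational_of_linear_system {n : ℕ} (c : Fin n → Fin n → Language α)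
    (d X : Fin n → Language α) (hc : ∀ i j, IsRational (c i j)) (hε : ∀ i j, [] ∉ c i j)
    (hd : ∀ i, IsRational (d i)) (hX : ∀ i, X i = ∑ j, c i j * X j + d i) (i : Fin n) :
    IsRational (X i) := by
  induction n with
  | zero => exact i.elim0
  | succ n ih =>
    let s := (c 0 0)∗
    have hs : IsRational s := (hc 0 0).kstar
    have hzero : X 0 = s * (∑ j : Fin n, c 0 j.succ * X j.succ + d 0) := by
      rw [← self_eq_mul_add_iff (hε 0 0), ← add_assoc, ← Fin.sum_univ_succ (fun j => c 0 j * X j)]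
      exact hX 0
    have hsucc : ∀ i : Fin n, IsRational (X i.succ) := by
      refine ih (fun i j => c i.succ j.succ + c i.succ 0 * (s * c 0 j.succ))
        (fun i => c i.succ 0 * (s * d 0) + d i.succ) (fun i => X i.succ)
        (fun i j => (hc _ _).add ((hc _ _).mul (hs.mul (hc _ _)))) (fun i j => ?_)
        (fun i => ((hc _ _).mul (hs.mul (hd _))).add (hd _)) (fun i => ?_)
      · exact fun h => h.elim (hε _ _) (nil_notMem_mul_left (hε _ _))
      · rw [hX i.succ, Fin.sum_univ_succ, hzero]
        simp only [mul_add, add_mul, Finset.mul_sum, Finset.sum_add_distrib, mul_assoc]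
        abel
    cases i using Fin.cases with
    | zero =>
      rw [hzero]
      exact hs.mul ((IsRational.sum fun j _ => (hc _ _).mul (hsucc j)).add (hd 0))
    | succ i => exact hsucc i

theorem mem_finset_sum {ι : Type*} {s : Finset ι} {L : ι → Language α} {w : List α} :
    w ∈ ∑ i ∈ s, L i ↔ ∃ i ∈ s, w ∈ L i := by
  classical
  induction s using Finset.induction_on with
  | empty => simp [notMem_zero]
  | insert i s hi ih => rw [Finset.sum_insert hi, mem_add, ih, Finset.exists_mem_insert]

theorem acceptsFrom_eq_sum {σ : Type*} [Fintype α] [Fintype σ] [DecidableEq σ] (D : DFA α σ)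
    (p : σ) [Decidable (p ∈ D.accept)] :
    D.acceptsFrom p = ∑ q, (∑ a with D.step p a = q, {[a]}) * D.acceptsFrom q +
      if p ∈ D.accept then 1 else 0 := by
  ext w
  simp only [mem_add, mem_finset_sum, mem_mul, Finset.mem_univ, Finset.mem_filter, true_and,
    mem_singleton_iff]
  cases w with
  | nil => split_ifs with h <;> simp [DFA.mem_acceptsFrom, h, mem_one, notMem_zero]
  | cons a w => split_ifs <;> simp [DFA.mem_acceptsFrom, mem_one, notMem_zero]

theorem isRational_of_isRegular [Finite α] (hL : L.IsRegular) : IsRational L := by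
  classical
  have := Fintype.ofFinite α
  obtain ⟨σ, _, D, rfl⟩ := hL
  rw [← DFA.accepts_reindex D (Fintype.equivFin σ)]
  set D' := DFA.reindex (Fintype.equivFin σ) D
  refine isRational_of_linear_system (fun p q => ∑ a with D'.step p a = q, {[a]})
    (fun p => if p ∈ D'.accept then 1 else 0) D'.acceptsFrom
    (fun p q => .sum fun a _ => .singleton a) (fun p q => ?_) (fun p => ?_)
    (fun p => acceptsFrom_eq_sum D' p) D'.start
  · simp [mem_finset_sum, mem_singleton_iff]
  · split_ifs
    exacts [.one, .zero]

theorem isRegular_setOf_foldr_mem {P : Type*} [Finite P] (f : α → P → P) (p₀ : P) (S : Set P) :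
    IsRegular ({w | w.foldr f p₀ ∈ S} : Language α) := by
  have := Fintype.ofFinite P
  let D : DFA α P := ⟨fun p a => f a p, p₀, S⟩
  refine IsRegular.of_reverse (isRegular_iff.2 ⟨P, inferInstance, D, ?_⟩)
  ext w
  change w.foldl (fun p a => f a p) p₀ ∈ S ↔ w.reverse.foldr f p₀ ∈ S
  rw [List.foldr_reverse]

end Kleene

/-! ### Recognizable sets of trees -/

namespace UTree

variable {B C : Type} {T : UTree B} {u t : Node} {i j : ℕ}

/-- The tree with the same nodes as `T`, labelled by `ℓ`. -/
def relabel (T : UTree B) (ℓ : Node → C) : UTree C := { T with label := ℓ }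

/-- The nodes of the forest that consists of the subtrees rooted at `u·i, u·(i+1), …`. In the
first-child / next-sibling encoding, the forests `(u·i, 0)` and `(u, i+1)` are the two subtrees of
the node `u·i`. -/
def forest (T : UTree B) (u : Node) (i : ℕ) : Set Node :=
  {t | t ∈ T.dom ∧ ∃ j, i ≤ j ∧ u ++ [j] <+: t}

theorem child_mem_of_le (h : u ++ [j] ∈ T.dom) (hij : i ≤ j) : u ++ [i] ∈ T.dom := by
  rcases hij.eq_or_lt with rfl | hij
  · exact h
  · exact T.sib_closed h hij

theorem forest_of_notMem (h : u ++ [i] ∉ T.dom) : T.forest u i = ∅ :=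
  Set.eq_empty_of_forall_notMem fun _ ⟨ht, _, hij, hj⟩ =>
    h (child_mem_of_le (T.prefix_closed ht hj) hij)

theorem mem_forest_iff (h : u ++ [i] ∈ T.dom) :
    t ∈ T.forest u i ↔ t = u ++ [i] ∨ t ∈ T.forest (u ++ [i]) 0 ∨ t ∈ T.forest u (i + 1) := by
  constructor
  · rintro ⟨ht, j, hij, hj⟩
    rcases hij.eq_or_lt with rfl | hij
    · obtain ⟨_ | ⟨k, r⟩, rfl⟩ := hj
      · exact .inl (List.append_nil _)
      · exact .inr (.inl ⟨ht, k, k.zero_le, r, by simp⟩)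
    · exact .inr (.inr ⟨ht, j, hij, hj⟩)
  · rintro (rfl | ⟨ht, j, -, hj⟩ | ⟨ht, j, hij, hj⟩)
    · exact ⟨h, i, le_rfl, List.prefix_rfl⟩
    · exact ⟨ht, i, le_rfl, (List.prefix_append _ _).trans hj⟩
    · exact ⟨ht, j, by lia, hj⟩

theorem eq_nil_or_mem_forest (ht : t ∈ T.dom) : t = [] ∨ t ∈ T.forest [] 0 := by
  rcases t with _ | ⟨i, r⟩
  · exact .inl rfl
  · exact .inr ⟨ht, i, i.zero_le, r, rfl⟩

theorem ne_of_mem_forest_zero (h : t ∈ T.forest u 0) : t ≠ u := by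
  rintro rfl
  obtain ⟨-, j, -, hj⟩ := h
  simpa using hj.length_le

theorem prefix_of_mem_forest (h : t ∈ T.forest u i) : u <+: t := by
  obtain ⟨-, j, -, hj⟩ := h
  exact (List.prefix_append _ _).trans hj

theorem not_prefix_of_mem_forest_succ (h : t ∈ T.forest u (i + 1)) : ¬ u ++ [i] <+: t := by
  obtain ⟨-, j, hij, hj⟩ := h
  intro hi
  have : i = j := by
    simpa using (List.prefix_of_prefix_length_le hi hj (by simp)).eq_of_length (by simp)
  lia

theorem ncard_forest_lt {S : Set Node} (h : u ++ [i] ∈ T.dom) (hS : S ⊆ T.forest u i)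
    (hmem : u ++ [i] ∉ S) : S.ncard < (T.forest u i).ncard :=
  Set.ncard_lt_ncard
    ((Set.ssubset_iff_of_subset hS).2 ⟨_, (mem_forest_iff h).2 (.inl rfl), hmem⟩)
    (T.dom.finite_toSet.subset fun _ ht => ht.1)

theorem ncard_forest_zero_lt (h : u ++ [i] ∈ T.dom) :
    (T.forest (u ++ [i]) 0).ncard < (T.forest u i).ncard :=
  ncard_forest_lt h (fun _ ht => (mem_forest_iff h).2 (.inr (.inl ht)))
    fun hmem => ne_of_mem_forest_zero hmem rfl

theorem ncard_forest_succ_lt (h : u ++ [i] ∈ T.dom) :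
    (T.forest u (i + 1)).ncard < (T.forest u i).ncard :=
  ncard_forest_lt h (fun _ ht => (mem_forest_iff h).2 (.inr (.inr ht)))
    fun hmem => not_prefix_of_mem_forest_succ hmem List.prefix_rfl

theorem forest_induction (T : UTree B) {motive : Node → ℕ → Prop}
    (empty : ∀ u i, u ++ [i] ∉ T.dom → motive u i)
    (node : ∀ u i, u ++ [i] ∈ T.dom → motive (u ++ [i]) 0 → motive u (i + 1) → motive u i)
    (u : Node) (i : ℕ) : motive u i := by
  by_cases h : u ++ [i] ∈ T.dom
  · exact node u i h (forest_induction T empty node (u ++ [i]) 0)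
      (forest_induction T empty node u (i + 1))
  · exact empty u i h
termination_by (T.forest u i).ncard
decreasing_by
  · exact ncard_forest_zero_lt h
  · exact ncard_forest_succ_lt h

end UTree

/-- A deterministic bottom-up automaton on the first-child / next-sibling encoding of forests:
`init` is the state of the empty forest, and `step b p q` that of a forest whose first root carries
the letter `b`, where `p` is the state of the forest below that root and `q` that of the trees to
its right. Acceptance is left to `Recognizable`. -/
structure ForestAutomaton (B P : Type) where
  init : P
  step : B → P → P → P

namespace ForestAutomaton

variable {B C D P P' : Type} (𝒜 : ForestAutomaton B P) {T : UTree B} {u : Node} {i : ℕ}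

/-- The state of the automaton on the forest of the subtrees of `T` rooted at `u·i, u·(i+1), …`. -/
noncomputable def eval (T : UTree B) (u : Node) (i : ℕ) : P :=
  open Classical in
  if h : u ++ [i] ∈ T.dom then
    𝒜.step (T.label (u ++ [i])) (eval T (u ++ [i]) 0) (eval T u (i + 1))
  else 𝒜.init
termination_by (T.forest u i).ncard
decreasing_by
  · exact UTree.ncard_forest_zero_lt h
  · exact UTree.ncard_forest_succ_lt h

variable {𝒜}

theorem eval_of_mem (h : u ++ [i] ∈ T.dom) :
    𝒜.eval T u i =
      𝒜.step (T.label (u ++ [i])) (𝒜.eval T (u ++ [i]) 0) (𝒜.eval T u (i + 1)) := by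
  rw [eval, dif_pos h]

theorem eval_of_notMem (h : u ++ [i] ∉ T.dom) : 𝒜.eval T u i = 𝒜.init := by
  rw [eval, dif_neg h]

theorem eval_relabel_of_mem {𝒜 : ForestAutomaton C P} (ℓ : Node → C) (h : u ++ [i] ∈ T.dom) :
    𝒜.eval (T.relabel ℓ) u i = 𝒜.step (ℓ (u ++ [i])) (𝒜.eval (T.relabel ℓ) (u ++ [i]) 0)
      (𝒜.eval (T.relabel ℓ) u (i + 1)) :=
  eval_of_mem (T := T.relabel ℓ) h

theorem eval_relabel_of_notMem {𝒜 : ForestAutomaton C P} (ℓ : Node → C) (h : u ++ [i] ∉ T.dom) :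
    𝒜.eval (T.relabel ℓ) u i = 𝒜.init :=
  eval_of_notMem (T := T.relabel ℓ) h

theorem eval_eq {g : Node → ℕ → P} (h₀ : ∀ u i, u ++ [i] ∉ T.dom → g u i = 𝒜.init)
    (h₁ : ∀ u i, u ++ [i] ∈ T.dom →
      g u i = 𝒜.step (T.label (u ++ [i])) (g (u ++ [i]) 0) (g u (i + 1)))
    (u : Node) (i : ℕ) : 𝒜.eval T u i = g u i := by
  induction u, i using T.forest_induction with
  | empty u i h => rw [eval_of_notMem h, h₀ u i h]
  | node u i h ih₀ ih₁ => rw [eval_of_mem h, ih₀, ih₁, h₁ u i h]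

theorem eval_congr {T' : UTree B} (hdom : T.dom = T'.dom)
    (h : ∀ t ∈ T.forest u i, T.label t = T'.label t) : 𝒜.eval T u i = 𝒜.eval T' u i := by
  induction u, i using T.forest_induction with
  | empty u i hm => rw [eval_of_notMem hm, eval_of_notMem (hdom ▸ hm)]
  | node u i hm ih₀ ih₁ =>
    simp only [UTree.mem_forest_iff hm, or_imp, forall_and, forall_eq] at h
    rw [eval_of_mem hm, eval_of_mem (T := T') (hdom ▸ hm), h.1, ih₀ h.2.1, ih₁ h.2.2]

/-- The automaton running two automata in parallel. -/
def prod (𝒜 : ForestAutomaton B P) (ℬ : ForestAutomaton B P') : ForestAutomaton B (P × P') where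
  init := (𝒜.init, ℬ.init)
  step b p q := (𝒜.step b p.1 q.1, ℬ.step b p.2 q.2)

theorem eval_prod {ℬ : ForestAutomaton B P'} :
    (𝒜.prod ℬ).eval T u i = (𝒜.eval T u i, ℬ.eval T u i) := by
  refine eval_eq (g := fun u i => (𝒜.eval T u i, ℬ.eval T u i)) (fun u i h => ?_) (fun u i h => ?_)
    u i
  · simp only [eval_of_notMem h, prod]
  · simp only [eval_of_mem h, prod]

/-- The automaton looking for a node at which `Φ` holds of the letter and of the states of `𝒜` on
the forests below and to the right of that node. -/
def search (𝒜 : ForestAutomaton B P) (Φ : B → P → P → Prop) : ForestAutomaton B (P × Prop) where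
  init := (𝒜.init, False)
  step b p q := (𝒜.step b p.1 q.1, Φ b p.1 q.1 ∨ p.2 ∨ q.2)

theorem eval_search {Φ : B → P → P → Prop} :
    (𝒜.search Φ).eval T u i = (𝒜.eval T u i, ∃ v j, v ++ [j] ∈ T.forest u i ∧
      Φ (T.label (v ++ [j])) (𝒜.eval T (v ++ [j]) 0) (𝒜.eval T v (j + 1))) := by
  refine eval_eq (g := fun u i => (𝒜.eval T u i, ∃ v j, v ++ [j] ∈ T.forest u i ∧
    Φ (T.label (v ++ [j])) (𝒜.eval T (v ++ [j]) 0) (𝒜.eval T v (j + 1))))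
    (fun u i h => ?_) (fun u i h => ?_) u i
  · simp [UTree.forest_of_notMem h, eval_of_notMem h, search]
  · simp only [UTree.mem_forest_iff h, or_and_right, exists_or, eval_of_mem h, search]
    simp [and_assoc]

/-- The subset construction for the image of the automaton under guessing, at every node, a second
component of the letter. -/
def guess (𝒜 : ForestAutomaton D P) (f : B → C → D) : ForestAutomaton B (Set P) where
  init := {𝒜.init}
  step b X Y := {p | ∃ c, ∃ x ∈ X, ∃ y ∈ Y, 𝒜.step (f b c) x y = p}

theorem eval_guess {𝒜 : ForestAutomaton D P} {f : B → C → D} [Nonempty C] :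
    (𝒜.guess f).eval T u i =
      Set.range fun g : Node → C => 𝒜.eval (T.relabel fun s => f (T.label s) (g s)) u i := by
  classical
  refine eval_eq (g := fun u i => Set.range fun g : Node → C =>
    𝒜.eval (T.relabel fun s => f (T.label s) (g s)) u i) (fun u i h => ?_) (fun u i h => ?_) u i
  · simp only [eval_relabel_of_notMem _ h, Set.range_const, guess]
  ext p
  constructor
  · rintro ⟨g, rfl⟩
    refine ⟨g (u ++ [i]), _, ⟨g, rfl⟩, _, ⟨g, rfl⟩, ?_⟩
    exact (eval_relabel_of_mem (fun s => f (T.label s) (g s)) h).symm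
  · rintro ⟨c, _, ⟨g₀, rfl⟩, _, ⟨g₁, rfl⟩, rfl⟩
    -- The three guesses concern disjoint sets of nodes, so they can be glued.
    let g : Node → C := fun t => if t = u ++ [i] then c else if u ++ [i] <+: t then g₀ t else g₁ t
    have hroot : g (u ++ [i]) = c := if_pos rfl
    have hbelow : ∀ t ∈ T.forest (u ++ [i]) 0, g t = g₀ t := fun t ht =>
      (if_neg (UTree.ne_of_mem_forest_zero ht)).trans (if_pos (UTree.prefix_of_mem_forest ht))
    have hright : ∀ t ∈ T.forest u (i + 1), g t = g₁ t := fun t ht => by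
      have hp := UTree.not_prefix_of_mem_forest_succ ht
      exact (if_neg fun h : t = u ++ [i] => hp (h ▸ List.prefix_rfl)).trans (if_neg hp)
    refine ⟨g, (eval_relabel_of_mem _ h).trans ?_⟩
    congr 1
    · exact congrArg _ hroot
    · exact eval_congr rfl fun t ht => congrArg _ (hbelow t ht)
    · exact eval_congr rfl fun t ht => congrArg _ (hright t ht)

end ForestAutomaton

/-- A set of trees is recognizable if a forest automaton with finitely many states decides
membership from its state on the forest below the root and the letter of the root. -/
def Recognizable {B : Type} (L : Set (UTree B)) : Prop :=
  ∃ (P : Type) (_ : Finite P) (𝒜 : ForestAutomaton B P) (acc : B → P → Prop),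
    ∀ T, T ∈ L ↔ acc (T.label []) (𝒜.eval T [] 0)

namespace Recognizable

open ForestAutomaton

variable {B C D : Type} {L L' : Set (UTree B)}

theorem mem_congr (hL : Recognizable L) {T T' : UTree B} (hdom : T.dom = T'.dom)
    (h : ∀ t ∈ T.dom, T.label t = T'.label t) : T ∈ L ↔ T' ∈ L := by
  obtain ⟨P, _, 𝒜, acc, hacc⟩ := hL
  rw [hacc, hacc, h _ T.nil_mem, eval_congr hdom fun t ht => h t ht.1]

theorem compl (hL : Recognizable L) : Recognizable Lᶜ := by
  obtain ⟨P, hP, 𝒜, acc, hacc⟩ := hL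
  exact ⟨P, hP, 𝒜, fun b p => ¬ acc b p, fun T => not_congr (hacc T)⟩

theorem inter (hL : Recognizable L) (hL' : Recognizable L') : Recognizable (L ∩ L') := by
  obtain ⟨P, _, 𝒜, acc, hacc⟩ := hL
  obtain ⟨P', _, ℬ, acc', hacc'⟩ := hL'
  refine ⟨P × P', inferInstance, 𝒜.prod ℬ, fun b p => acc b p.1 ∧ acc' b p.2, fun T => ?_⟩
  rw [eval_prod]
  exact and_congr (hacc T) (hacc' T)

theorem exists_relabel [Nonempty C] {L : Set (UTree D)} (hL : Recognizable L) (f : B → C → D) :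
    Recognizable {T : UTree B | ∃ g : Node → C, T.relabel (fun s => f (T.label s) (g s)) ∈ L} := by
  classical
  obtain ⟨P, _, 𝒜, acc, hacc⟩ := hL
  refine ⟨Set P, inferInstance, 𝒜.guess f, fun b X => ∃ c, ∃ p ∈ X, acc (f b c) p, fun T => ?_⟩
  simp only [Set.mem_ofPred_eq, hacc, eval_guess]
  constructor
  · rintro ⟨g, hg⟩
    exact ⟨g [], _, ⟨g, rfl⟩, hg⟩
  · rintro ⟨c, _, ⟨g, rfl⟩, hp⟩
    refine ⟨Function.update g [] c, ?_⟩
    have hroot : Function.update g [] c [] = c := Function.update_self ..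
    have hbelow : ∀ t ∈ T.forest [] 0, Function.update g [] c t = g t := fun t ht =>
      Function.update_of_ne (UTree.ne_of_mem_forest_zero ht) ..
    refine (iff_of_eq (congrArg₂ acc ?_ ?_)).2 hp
    · exact congrArg (f (T.label [])) hroot
    · exact eval_congr rfl fun t ht => congrArg _ (hbelow t ht)

theorem preimage_relabel_root {L : Set (UTree C)} (hL : Recognizable L)
    (f g : B → C) :
    Recognizable {T : UTree B |
      T.relabel (fun s => if s = [] then f (T.label s) else g (T.label s)) ∈ L} := by
  obtain ⟨P, hP, 𝒜, acc, hacc⟩ := hL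
  refine ⟨P, hP, ⟨𝒜.init, fun b => 𝒜.step (g b)⟩, fun b => acc (f b), fun T => ?_⟩
  let ℓ : Node → C := fun s => if s = [] then f (T.label s) else g (T.label s)
  have hroot : ℓ [] = f (T.label []) := if_pos rfl
  refine (hacc _).trans (iff_of_eq (congrArg₂ acc hroot (Eq.symm ?_)))
  refine eval_eq (T := T) (fun u i h => eval_relabel_of_notMem ℓ h)
    (fun u i h => (eval_relabel_of_mem ℓ h).trans ?_) [] 0
  exact congrArg (𝒜.step · _ _) (if_neg (by simp))

theorem exists_child {P : Type} [Finite P] (𝒜 : ForestAutomaton B P) (Φ : B → P → P → Prop) :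
    Recognizable {T : UTree B | ∃ u i, u ++ [i] ∈ T.dom ∧
      Φ (T.label (u ++ [i])) (𝒜.eval T (u ++ [i]) 0) (𝒜.eval T u (i + 1))} := by
  refine ⟨P × Prop, inferInstance, 𝒜.search Φ, fun _ p => p.2, fun T => ?_⟩
  rw [eval_search]
  refine exists₂_congr fun u i => and_congr_left' ⟨fun h => ?_, And.left⟩
  exact (UTree.eq_nil_or_mem_forest h).resolve_left (by simp)

theorem exists_node {P : Type} [Finite P] (𝒜 : ForestAutomaton B P) (Φ : B → P → Prop) :
    Recognizable {T : UTree B | ∃ s ∈ T.dom, Φ (T.label s) (𝒜.eval T s 0)} := by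
  refine ⟨P × Prop, inferInstance, 𝒜.search fun b p _ => Φ b p, fun b p => Φ b p.1 ∨ p.2,
    fun T => ?_⟩
  rw [eval_search]
  constructor
  · rintro ⟨s, hs, h⟩
    rcases s.eq_nil_or_concat' with rfl | ⟨u, i, rfl⟩
    · exact .inl h
    · exact .inr ⟨u, i, (UTree.eq_nil_or_mem_forest hs).resolve_left (by simp), h⟩
  · rintro (h | ⟨u, i, hs, h⟩)
    · exact ⟨[], T.nil_mem, h⟩
    · exact ⟨_, hs.1, h⟩

theorem exists_label (p : B → Prop) :
    Recognizable {T : UTree B | ∃ s ∈ T.dom, p (T.label s)} :=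
  exists_node (⟨(), fun _ _ _ => ()⟩ : ForestAutomaton B Unit) fun b _ => p b

-- Two nodes are distinct if some guessed set separates them.
theorem existsUnique_label (p : B → Prop) :
    Recognizable {T : UTree B | ∃! s, s ∈ T.dom ∧ p (T.label s)} := by
  have separated : Recognizable {T : UTree B | ∃ X : Node → Prop,
      (∃ s ∈ T.dom, p (T.label s) ∧ X s) ∧ ∃ s ∈ T.dom, p (T.label s) ∧ ¬ X s} :=
    ((exists_label fun b : B × Prop => p b.1 ∧ b.2).inter
      (exists_label fun b : B × Prop => p b.1 ∧ ¬ b.2)).exists_relabel Prod.mk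
  convert (exists_label p).inter separated.compl using 1
  ext T
  constructor
  · rintro ⟨s, ⟨hs, hp⟩, huniq⟩
    refine ⟨⟨s, hs, hp⟩, ?_⟩
    rintro ⟨X, ⟨t, ht, hpt, hX⟩, t', ht', hpt', hX'⟩
    rw [huniq t ⟨ht, hpt⟩, ← huniq t' ⟨ht', hpt'⟩] at hX
    exact hX' hX
  · rintro ⟨⟨s, hs, hp⟩, hsep⟩
    refine ⟨s, ⟨hs, hp⟩, fun t ht => by_contra fun hne => hsep ?_⟩
    exact ⟨(· = s), ⟨s, hs, hp, rfl⟩, t, ht.1, ht.2, hne⟩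

/-- The automaton deciding whether a letter in `q` occurs in a forest. -/
def occurs (q : B → Prop) : ForestAutomaton B Prop := ⟨False, fun b x y => q b ∨ x ∨ y⟩

theorem eval_occurs {q : B → Prop} {T : UTree B} {u : Node} {i : ℕ} :
    (occurs q).eval T u i ↔ ∃ t ∈ T.forest u i, q (T.label t) := by
  rw [eval_eq (g := fun u i => ∃ t ∈ T.forest u i, q (T.label t)) (fun u i h => ?_)
    (fun u i h => ?_)]
  · simp [UTree.forest_of_notMem h, occurs]
  · simp [UTree.mem_forest_iff h, occurs, or_and_right, exists_or]

theorem exists_descR (p q : B → Prop) :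
    Recognizable {T : UTree B | ∃ s t, T.descR s t ∧ p (T.label s) ∧ q (T.label t)} := by
  convert exists_node (occurs q) fun b x => p b ∧ (q b ∨ x) using 1
  ext T
  simp only [eval_occurs]
  constructor
  · rintro ⟨s, t, ⟨hs, ht, r, rfl⟩, hp, hq⟩
    refine ⟨s, hs, hp, ?_⟩
    rcases r with _ | ⟨j, r⟩
    · exact .inl (by simpa using hq)
    · exact .inr ⟨_, ⟨ht, j, j.zero_le, r, by simp⟩, hq⟩
  · rintro ⟨s, hs, hp, hq | ⟨t, ht, hq⟩⟩
    · exact ⟨s, s, ⟨hs, hs, List.prefix_rfl⟩, hp, hq⟩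
    · exact ⟨s, t, ⟨hs, ht.1, UTree.prefix_of_mem_forest ht⟩, hp, hq⟩

/-- The automaton deciding whether a letter in `q` occurs at a root of a forest. -/
def rootOccurs (q : B → Prop) : ForestAutomaton B Prop := ⟨False, fun b _ y => q b ∨ y⟩

theorem eval_rootOccurs {q : B → Prop} {T : UTree B} {u : Node} {i : ℕ} :
    (rootOccurs q).eval T u i ↔ ∃ j, i ≤ j ∧ u ++ [j] ∈ T.dom ∧ q (T.label (u ++ [j])) := by
  rw [eval_eq (g := fun u i => ∃ j, i ≤ j ∧ u ++ [j] ∈ T.dom ∧ q (T.label (u ++ [j])))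
    (fun u i h => ?_) (fun u i h => ?_)]
  · simpa [rootOccurs] using fun j hij hj => absurd (UTree.child_mem_of_le hj hij) h
  · simp [rootOccurs, Nat.le_iff_lt_or_eq, or_and_right, exists_or, h, or_comm]

theorem exists_sibR (p q : B → Prop) :
    Recognizable {T : UTree B | ∃ s t, T.sibR s t ∧ p (T.label s) ∧ q (T.label t)} := by
  convert exists_child (rootOccurs q) fun b _ y => p b ∧ (q b ∨ y) using 1
  ext T
  simp only [eval_rootOccurs]
  constructor
  · rintro ⟨_, _, ⟨hs, ht, u, i, j, rfl, rfl, hij⟩, hp, hq⟩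
    refine ⟨u, i, hs, hp, ?_⟩
    rcases hij.eq_or_lt with rfl | hij
    exacts [.inl hq, .inr ⟨j, hij, ht, hq⟩]
  · rintro ⟨u, i, hi, hp, hq | ⟨j, hij, hj, hq⟩⟩
    · exact ⟨_, _, ⟨hi, hi, u, i, i, rfl, rfl, le_rfl⟩, hp, hq⟩
    · exact ⟨_, _, ⟨hi, hj, u, i, j, rfl, rfl, by lia⟩, hp, hq⟩

end Recognizable

/-! ### From formulas to forest automata -/

namespace UTree

variable {A : Type}

/-- The tree `T` with the values of all variables recorded in the labels: `Sum.inl x` marks the node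
denoted by the first-order variable `x`, and `Sum.inr X` the elements of the set denoted by `X`. -/
def decorate (T : UTree A) (v : ℕ → Node) (V : ℕ → Set Node) : UTree (A × (ℕ ⊕ ℕ → Prop)) :=
  T.relabel fun s => (T.label s, Sum.elim (v · = s) (s ∈ V ·))

/-- The tree `T` with the mark `k` redistributed: it is now carried by the nodes in `X`. -/
def mark (T : UTree (A × (ℕ ⊕ ℕ → Prop))) (k : ℕ ⊕ ℕ) (X : Set Node) :
    UTree (A × (ℕ ⊕ ℕ → Prop)) :=
  T.relabel fun s => ((T.label s).1, Function.update (T.label s).2 k (s ∈ X))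

variable {T : UTree A} {v : ℕ → Node} {V : ℕ → Set Node}

theorem decorate_update_node (n : ℕ) (s : Node) :
    T.decorate (Function.update v n s) V = (T.decorate v V).mark (.inl n) {s} := by
  have h : ∀ t : Node, (Function.update v n s · = t) =
      Function.update (v · = t) n (t ∈ ({s} : Set Node)) := by
    intro t
    rw [Set.mem_singleton_iff, eq_comm (a := t)]
    exact funext fun x => Function.apply_update (fun _ u => u = t) v n s x
  simp only [decorate, mark, relabel, Sum.update_elim_inl, h]

theorem decorate_update_set (n : ℕ) (S : Set Node) :
    T.decorate v (Function.update V n S) = (T.decorate v V).mark (.inr n) S := by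
  have h : ∀ t, (t ∈ Function.update V n S ·) = Function.update (t ∈ V ·) n (t ∈ S) :=
    fun t => funext fun X => Function.apply_update (fun _ U => t ∈ U) V n S X
  simp only [decorate, mark, relabel, Sum.update_elim_inr, h]

end UTree

namespace Recognizable

variable {A : Type} {L : Set (UTree (A × (ℕ ⊕ ℕ → Prop)))}

theorem exists_mark (hL : Recognizable L) (k : ℕ ⊕ ℕ) : Recognizable {T | ∃ X, T.mark k X ∈ L} :=
  hL.exists_relabel fun (b : A × (ℕ ⊕ ℕ → Prop)) c => (b.1, Function.update b.2 k c)

theorem mark_mem_congr (hL : Recognizable L) {T : UTree (A × (ℕ ⊕ ℕ → Prop))} {k : ℕ ⊕ ℕ}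
    {X Y : Set Node} (h : ∀ t ∈ T.dom, t ∈ X ↔ t ∈ Y) : T.mark k X ∈ L ↔ T.mark k Y ∈ L :=
  hL.mem_congr rfl fun t ht => by simp only [UTree.mark, UTree.relabel, h t ht]

end Recognizable

namespace MSO

variable {A : Type} {φ ψ : MSO A}

/-- A formula is recognizable if some recognizable set contains exactly the decorated trees that
satisfy it, first-order variables being restricted to nodes of the tree. -/
def IsRecognizable (φ : MSO A) : Prop :=
  ∃ L, Recognizable L ∧ ∀ (T : UTree A) (v : ℕ → Node) (V : ℕ → Set Node),
    (∀ x, v x ∈ T.dom) → (Sat T v V φ ↔ T.decorate v V ∈ L)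

namespace IsRecognizable

theorem eq (x y : ℕ) : (eq x y : MSO A).IsRecognizable := by
  refine ⟨_, .exists_label fun b => b.2 (.inl x) ∧ b.2 (.inl y), fun T v V hv => ?_⟩
  exact ⟨fun h => ⟨v x, hv x, rfl, h.symm⟩, fun ⟨_, _, hx, hy⟩ => hx.trans hy.symm⟩

theorem desc (x y : ℕ) : (desc x y : MSO A).IsRecognizable := by
  refine ⟨_, .exists_descR (·.2 (.inl x)) (·.2 (.inl y)), fun T v V _ => ?_⟩
  constructor
  · exact fun h => ⟨_, _, h, rfl, rfl⟩
  · rintro ⟨_, _, h, rfl, rfl⟩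
    exact h

theorem sib (x y : ℕ) : (sib x y : MSO A).IsRecognizable := by
  refine ⟨_, .exists_sibR (·.2 (.inl x)) (·.2 (.inl y)), fun T v V _ => ?_⟩
  constructor
  · exact fun h => ⟨_, _, h, rfl, rfl⟩
  · rintro ⟨_, _, h, rfl, rfl⟩
    exact h

theorem lab (a : A) (x : ℕ) : (lab a x).IsRecognizable := by
  refine ⟨_, .exists_label fun b => b.2 (.inl x) ∧ b.1 = a, fun T v V _ => ?_⟩
  constructor
  · exact fun ⟨hx, ha⟩ => ⟨_, hx, rfl, ha⟩
  · rintro ⟨_, hx, rfl, ha⟩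
    exact ⟨hx, ha⟩

theorem mem (X x : ℕ) : (mem X x : MSO A).IsRecognizable := by
  refine ⟨_, .exists_label fun b => b.2 (.inl x) ∧ b.2 (.inr X), fun T v V hv => ?_⟩
  constructor
  · exact fun h => ⟨_, hv x, rfl, h⟩
  · rintro ⟨_, -, rfl, h⟩
    exact h

theorem not : φ.IsRecognizable → φ.not.IsRecognizable := fun ⟨_, hL, h⟩ =>
  ⟨_, hL.compl, fun T v V hv => not_congr (h T v V hv)⟩

theorem and : φ.IsRecognizable → ψ.IsRecognizable → (φ.and ψ).IsRecognizable :=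
  fun ⟨_, hL, h⟩ ⟨_, hL', h'⟩ =>
    ⟨_, hL.inter hL', fun T v V hv => and_congr (h T v V hv) (h' T v V hv)⟩

theorem exFO (n : ℕ) : φ.IsRecognizable → (exFO n φ).IsRecognizable := by
  rintro ⟨L, hL, h⟩
  refine ⟨_, (hL.inter (.existsUnique_label (·.2 (.inl n)))).exists_mark (.inl n),
    fun T v V hv => ?_⟩
  have hsat : ∀ s ∈ T.dom,
      (Sat T (Function.update v n s) V φ ↔ (T.decorate v V).mark (.inl n) {s} ∈ L) := by
    intro s hs
    rw [h, T.decorate_update_node]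
    exact Function.forall_update_iff v (fun _ t => t ∈ T.dom) |>.2 ⟨hs, fun x _ => hv x⟩
  have hmark : ∀ X s, (((T.decorate v V).mark (.inl n) X).label s).2 (.inl n) ↔ s ∈ X :=
    fun X s => iff_of_eq (Function.update_self ..)
  simp only [Set.mem_inter_iff, Set.mem_ofPred_eq, hmark]
  constructor
  · rintro ⟨s, hs, hφ⟩
    exact ⟨{s}, (hsat s hs).1 hφ, s, ⟨hs, rfl⟩, fun t ht => ht.2⟩
  · rintro ⟨X, hX, s, ⟨hs, hsX⟩, huniq⟩
    refine ⟨s, hs, (hsat s hs).2 ((hL.mark_mem_congr fun t ht => ?_).1 hX)⟩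
    exact ⟨fun htX => huniq t ⟨ht, htX⟩, fun hts => hts ▸ hsX⟩

theorem exSO (n : ℕ) : φ.IsRecognizable → (exSO n φ).IsRecognizable := by
  rintro ⟨L, hL, h⟩
  refine ⟨_, hL.exists_mark (.inr n), fun T v V hv => ?_⟩
  constructor
  · rintro ⟨S, -, hS⟩
    rw [h _ _ _ hv, T.decorate_update_set] at hS
    exact ⟨S, hS⟩
  · rintro ⟨S, hS⟩
    refine ⟨S ∩ T.dom, Set.inter_subset_right, ?_⟩
    rw [h _ _ _ hv, T.decorate_update_set]
    exact (hL.mark_mem_congr fun t ht => (and_iff_left ht).symm).1 hS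

end IsRecognizable

theorem isRecognizable (φ : MSO A) : φ.IsRecognizable := by
  induction φ with
  | eq x y => exact .eq x y
  | desc x y => exact .desc x y
  | sib x y => exact .sib x y
  | lab a x => exact .lab a x
  | mem X x => exact .mem X x
  | not φ ih => exact ih.not
  | and φ ψ ihφ ihψ => exact ihφ.and ihψ
  | exFO n φ ih => exact ih.exFO n
  | exSO n φ ih => exact ih.exSO n

theorem DefinesB.recognizable {L : Set (UTree A)} (hφ : φ.DefinesB L) : Recognizable L := by
  obtain ⟨L', hL', h⟩ := φ.isRecognizable
  convert hL'.preimage_relabel_root (fun a => (a, Sum.elim (fun _ => True) fun _ => False))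
    (fun a => (a, fun _ => False)) using 1
  ext T
  rw [hφ T (fun _ => []) (fun _ => ∅), h T _ _ fun _ => T.nil_mem]
  refine hL'.mem_congr rfl fun t _ => ?_
  by_cases ht : t = [] <;> simp [UTree.decorate, UTree.relabel, ht, eq_comm]

end MSO

/-! ### From forest automata to nondeterministic tree automata -/

namespace UTree

variable {B : Type} {T : UTree B} {u : Node} {i : ℕ}

theorem mem_dom_iff_lt_childCount : u ++ [i] ∈ T.dom ↔ i < T.childCount u := by
  let C : Set ℕ := {j | u ++ [j] ∈ T.dom}
  have hfin : C.Finite := T.dom.finite_toSet.preimage fun _ _ _ _ h => by simpa using h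
  have hlower : IsLowerSet C := fun j k hkj hj => child_mem_of_le hj hkj
  obtain ⟨n, hn⟩ : ∃ n, C = Set.Iio n :=
    hlower.eq_univ_or_Iio.resolve_left fun h => Set.infinite_univ (h ▸ hfin)
  have hcount : T.childCount u = n :=
    (congrArg Set.ncard hn).trans (by simp [Set.ncard_eq_toFinset_card'])
  rw [hcount, ← Set.mem_Iio, ← hn]
  rfl

/-- The children `u·i, u·(i+1), …` of `u`. -/
noncomputable def childrenFrom (T : UTree B) (u : Node) (i : ℕ) : List Node :=
  (List.range' i (T.childCount u - i)).map fun j => u ++ [j]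

theorem childrenFrom_zero : T.childrenFrom u 0 = T.childrenList u := by
  simp [childrenList, childrenFrom, List.range_eq_range']

theorem childrenFrom_of_notMem (h : u ++ [i] ∉ T.dom) : T.childrenFrom u i = [] := by
  rw [mem_dom_iff_lt_childCount, not_lt] at h
  simp [childrenFrom, Nat.sub_eq_zero_of_le h]

theorem childrenFrom_of_mem (h : u ++ [i] ∈ T.dom) :
    T.childrenFrom u i = (u ++ [i]) :: T.childrenFrom u (i + 1) := by
  rw [mem_dom_iff_lt_childCount] at h
  have hsub : T.childCount u - i = T.childCount u - (i + 1) + 1 := by lia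
  rw [childrenFrom, hsub, List.range'_succ]
  rfl

end UTree

namespace ForestAutomaton

variable {B P : Type} (𝒜 : ForestAutomaton B P) (acc : B → P → Prop)
variable {T : UTree B} {ρ : Node → (P → P) × Prop} {u : Node} {i : ℕ}

/-- What the automaton has to know about a single tree whose root carries `b` and whose forest below
the root has state `p`: its action on the state of the forest to its right, and acceptance. -/
def treeState (b : B) (p : P) : (P → P) × Prop := (𝒜.step b p, acc b p)

/-- The state of a forest, computed from the tree states of its members. -/
def fold (w : List ((P → P) × Prop)) : P := w.foldr (fun q p => q.1 p) 𝒜.init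

theorem exists_matches_iff_eq_treeState [Finite P] (q : (P → P) × Prop) (b : B) :
    ∃ r : RegularExpression ((P → P) × Prop),
      ∀ w, w ∈ r.matches' ↔ q = 𝒜.treeState acc b (𝒜.fold w) := by
  obtain ⟨r, hr⟩ := isRational_of_isRegular <|
    isRegular_setOf_foldr_mem (fun (q : (P → P) × Prop) p => q.1 p) 𝒜.init
      {p | q = 𝒜.treeState acc b p}
  exact ⟨r, fun w => by rw [hr]; rfl⟩

/-- The bottom-up deterministic tree automaton that labels every node with its tree state. -/
noncomputable def toNUTA [Finite P] : NUTA B where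
  Q := (P → P) × Prop
  fintype_Q := Fintype.ofFinite _
  F := {q | q.2}
  δ q b := (𝒜.exists_matches_iff_eq_treeState acc q b).choose

variable {𝒜 acc}

theorem isRun_toNUTA [Finite P] :
    (𝒜.toNUTA acc).IsRun T ρ ↔
      ∀ s ∈ T.dom, ρ s = 𝒜.treeState acc (T.label s) (𝒜.fold ((T.childrenList s).map ρ)) :=
  forall₂_congr fun s _ => (𝒜.exists_matches_iff_eq_treeState acc (ρ s) _).choose_spec _

theorem fold_childrenFrom_of_notMem (h : u ++ [i] ∉ T.dom) :
    𝒜.fold ((T.childrenFrom u i).map ρ) = 𝒜.init := by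
  rw [UTree.childrenFrom_of_notMem h]
  rfl

theorem fold_childrenFrom_of_mem (h : u ++ [i] ∈ T.dom) :
    𝒜.fold ((T.childrenFrom u i).map ρ) =
      (ρ (u ++ [i])).1 (𝒜.fold ((T.childrenFrom u (i + 1)).map ρ)) := by
  rw [UTree.childrenFrom_of_mem h]
  rfl

theorem fold_eq_eval_of_isRun [Finite P] (hρ : (𝒜.toNUTA acc).IsRun T ρ) :
    𝒜.fold ((T.childrenFrom u i).map ρ) = 𝒜.eval T u i := by
  refine (eval_eq (fun u i h => fold_childrenFrom_of_notMem h) (fun u i h => ?_) u i).symm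
  rw [fold_childrenFrom_of_mem h, isRun_toNUTA.1 hρ _ h, ← UTree.childrenFrom_zero]
  rfl

theorem fold_treeState_eval :
    𝒜.fold ((T.childrenFrom u i).map fun s => 𝒜.treeState acc (T.label s) (𝒜.eval T s 0)) =
      𝒜.eval T u i := by
  induction u, i using T.forest_induction with
  | empty u i h => rw [fold_childrenFrom_of_notMem h, eval_of_notMem h]
  | node u i h _ ih =>
    rw [fold_childrenFrom_of_mem h, ih, eval_of_mem h]
    rfl

theorem accepts_toNUTA [Finite P] :
    (𝒜.toNUTA acc).Accepts T ↔ acc (T.label []) (𝒜.eval T [] 0) := by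
  constructor
  · rintro ⟨ρ, hρ, hF⟩
    have hroot : ρ [] = 𝒜.treeState acc (T.label []) (𝒜.eval T [] 0) := by
      rw [isRun_toNUTA.1 hρ [] T.nil_mem, ← UTree.childrenFrom_zero, fold_eq_eval_of_isRun hρ]
    exact (congrArg Prod.snd hroot).mp hF
  · intro h
    refine ⟨fun s => 𝒜.treeState acc (T.label s) (𝒜.eval T s 0), isRun_toNUTA.2 fun s _ => ?_, h⟩
    rw [← UTree.childrenFrom_zero, fold_treeState_eval]

end ForestAutomaton

theorem Recognizable.regularLang {A : Type} {L : Set (UTree A)} (hL : Recognizable L) :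
    RegularLang L := by
  obtain ⟨P, _, 𝒜, acc, hacc⟩ := hL
  exact ⟨𝒜.toNUTA acc, fun T => ForestAutomaton.accepts_toNUTA.trans (hacc T).symm⟩

/-! ### Definable properties of nodes and colourings -/

namespace UTree

variable {A : Type} {T : UTree A} {s t : Node}

theorem eq_nil_iff_forall_descR (hs : s ∈ T.dom) : s = [] ↔ ∀ t ∈ T.dom, T.descR s t := by
  constructor
  · rintro rfl t ht
    exact ⟨hs, ht, List.nil_prefix⟩
  · exact fun h => List.prefix_nil.1 (h [] T.nil_mem).2.2

theorem isLeaf_iff_forall_descR (hs : s ∈ T.dom) :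
    T.isLeaf s ↔ ∀ t ∈ T.dom, T.descR s t → t = s := by
  constructor
  · rintro ⟨-, hleaf⟩ t ht ⟨-, -, r, rfl⟩
    rcases r with _ | ⟨i, r⟩
    · exact List.append_nil s
    · exact absurd (T.prefix_closed ht ⟨r, by simp⟩) (hleaf i)
  · refine fun h => ⟨hs, fun i hi => ?_⟩
    simpa using h _ hi ⟨hs, hi, [i], rfl⟩

theorem isLast_iff_forall_sibR (hs : s ∈ T.dom) :
    T.isLast s ↔ ∀ t ∈ T.dom, T.sibR s t → t = s := by
  constructor
  · rintro hlast t ht ⟨-, -, u, i, j, rfl, rfl, hij⟩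
    obtain ⟨v, k, hv, hk⟩ := hlast.resolve_left (by simp)
    obtain ⟨rfl, rfl⟩ := List.append_singleton_inj.1 hv
    have hji : j ≤ i := not_lt.1 fun h => hk (child_mem_of_le ht h)
    rw [hij.antisymm hji]
  · intro h
    rcases s.eq_nil_or_concat' with rfl | ⟨u, i, rfl⟩
    · exact .inl rfl
    · refine .inr ⟨u, i, rfl, fun hi => ?_⟩
      simpa using h _ hi ⟨hs, hi, u, i, i + 1, rfl, rfl, i.le_succ⟩

theorem firstChildR_iff_descR_sibR :
    T.firstChildR s t ↔ T.descR s t ∧ s ≠ t ∧ ∀ r ∈ T.dom,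
      (T.descR s r → T.descR r t → r = s ∨ r = t) ∧ (T.sibR r t → r = t) := by
  constructor
  · rintro ⟨hs, ht, rfl⟩
    refine ⟨⟨hs, ht, [0], rfl⟩, by simp, fun r hr => ⟨?_, ?_⟩⟩
    · rintro ⟨-, -, hsr⟩ ⟨-, -, hrt⟩
      rcases List.prefix_concat_iff.1 hrt with rfl | hrs
      · exact .inr rfl
      · exact .inl (hrs.eq_of_length_le hsr.length_le)
    · rintro ⟨-, -, u, i, j, rfl, hj, hij⟩
      obtain ⟨rfl, rfl⟩ := List.append_singleton_inj.1 hj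
      rw [Nat.le_zero.1 hij]
  · rintro ⟨⟨hs, ht, w, rfl⟩, hne, h⟩
    rcases w with _ | ⟨i, w⟩
    · simp at hne
    have hi : s ++ [i] ∈ T.dom := T.prefix_closed ht ⟨w, by simp⟩
    obtain rfl : w = [] := by
      simpa using (h _ hi).1 ⟨hs, hi, [i], rfl⟩ ⟨hi, ht, w, by simp⟩
    have h0 : s ++ [0] ∈ T.dom := child_mem_of_le hi i.zero_le
    exact ⟨hs, ht, ((h _ h0).2 ⟨h0, ht, s, 0, i, rfl, rfl, i.zero_le⟩).symm⟩

theorem nsR_iff_sibR :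
    T.nsR s t ↔ T.sibR s t ∧ s ≠ t ∧ ∀ r ∈ T.dom, T.sibR s r → T.sibR r t → r = s ∨ r = t := by
  constructor
  · rintro ⟨hs, ht, u, i, rfl, rfl⟩
    refine ⟨⟨hs, ht, u, i, i + 1, rfl, rfl, i.le_succ⟩, by simp, fun r hr => ?_⟩
    rintro ⟨-, -, v, j, k, hv, rfl, hjk⟩ ⟨-, -, v', k', l, hk, hl, hkl⟩
    simp only [List.append_singleton_inj] at hv hk hl ⊢
    lia
  · rintro ⟨⟨hs, ht, u, i, j, rfl, rfl, hij⟩, hne, h⟩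
    have hij : i + 1 ≤ j := lt_of_le_of_ne hij fun h => hne (by rw [h])
    have hi : u ++ [i + 1] ∈ T.dom := child_mem_of_le ht hij
    have hsi : T.sibR (u ++ [i]) (u ++ [i + 1]) := ⟨hs, hi, u, i, i + 1, rfl, rfl, i.le_succ⟩
    have hit : T.sibR (u ++ [i + 1]) (u ++ [j]) := ⟨hi, ht, u, i + 1, j, rfl, rfl, hij⟩
    exact ⟨hs, ht, u, i, rfl, ((h _ hi hsi hit).resolve_left (by simp)).symm⟩

end UTree

namespace MSO

variable {A P : Type}

/-- Disjunction. -/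
def or (φ ψ : MSO A) : MSO A := .not (.and (.not φ) (.not ψ))

/-- Implication. -/
def imp (φ ψ : MSO A) : MSO A := .not (.and φ (.not ψ))

/-- Universal quantification over nodes. -/
def allFO (n : ℕ) (φ : MSO A) : MSO A := .not (.exFO n (.not φ))

/-- The conjunction of finitely many formulas. -/
noncomputable def all {ι : Type} [Finite ι] (φ : ι → MSO A) : MSO A :=
  ((Fintype.ofFinite ι).elems.toList.map φ).foldr and (.eq 0 0)

/-- The disjunction of finitely many formulas. -/
noncomputable def any {ι : Type} [Finite ι] (φ : ι → MSO A) : MSO A := .not (all fun i => (φ i).not)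

/-- Existential quantification over the set variables `0, …, n - 1`. -/
def exSOs : ℕ → MSO A → MSO A
  | 0, φ => φ
  | n + 1, φ => .exSO n (exSOs n φ)

section Sat

variable {T : UTree A} {v : ℕ → Node} {V : ℕ → Set Node} {φ ψ : MSO A}

@[simp] theorem sat_or : Sat T v V (φ.or ψ) ↔ Sat T v V φ ∨ Sat T v V ψ := by
  simp only [or, Sat, not_and_or, not_not]

@[simp] theorem sat_imp : Sat T v V (φ.imp ψ) ↔ (Sat T v V φ → Sat T v V ψ) := by
  simp only [imp, Sat, not_and_not_right]

@[simp] theorem sat_allFO {n : ℕ} :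
    Sat T v V (φ.allFO n) ↔ ∀ s ∈ T.dom, Sat T (Function.update v n s) V φ := by
  simp only [allFO, Sat, not_exists, not_and, not_not]

@[simp] theorem sat_all {ι : Type} [Finite ι] {φ : ι → MSO A} :
    Sat T v V (all φ) ↔ ∀ i, Sat T v V (φ i) := by
  have hlist : ∀ l : List ι,
      Sat T v V ((l.map φ).foldr and (.eq 0 0)) ↔ ∀ i ∈ l, Sat T v V (φ i) := by
    intro l
    induction l with
    | nil => simp [Sat]
    | cons i l ih => simp [Sat, ih]
  simp [all, hlist, Fintype.complete]

@[simp] theorem sat_any {ι : Type} [Finite ι] {φ : ι → MSO A} :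
    Sat T v V (any φ) ↔ ∃ i, Sat T v V (φ i) := by
  simp only [any, Sat, sat_all, not_forall, not_not]

theorem sat_exSOs {n : ℕ} :
    Sat T v V (φ.exSOs n) ↔ ∃ W : ℕ → Set Node,
      (∀ i < n, W i ⊆ ↑T.dom) ∧ (∀ i, n ≤ i → W i = V i) ∧ Sat T v W φ := by
  induction n generalizing V with
  | zero =>
    constructor
    · exact fun h => ⟨V, by simp, fun _ _ => rfl, h⟩
    · rintro ⟨W, -, hW, h⟩
      rwa [← funext fun i => hW i i.zero_le]
  | succ n ih =>
    simp only [exSOs, Sat, ih]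
    constructor
    · rintro ⟨S, hS, W, hW, hWV, h⟩
      refine ⟨W, fun i hi => ?_, fun i hi => ?_, h⟩
      · rcases Nat.lt_succ_iff_lt_or_eq.1 hi with hi | rfl
        · exact hW i hi
        · rwa [hWV i le_rfl, Function.update_self]
      · rw [hWV i (by lia), Function.update_of_ne (by lia)]
    · rintro ⟨W, hW, hWV, h⟩
      refine ⟨W n, hW n n.lt_succ_self, W, fun i hi => hW i (by lia), fun i hi => ?_, h⟩
      rcases hi.eq_or_lt with rfl | hi
      · rw [Function.update_self]
      · rw [hWV i hi, Function.update_of_ne (by lia)]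

end Sat

/-- `φ`, as a formula whose only free variables are the first-order variables `0` and `1`, defines
the binary relation `R` on nodes. -/
def DefinesBinary (φ : MSO A) (R : UTree A → Node → Node → Prop) : Prop :=
  ∀ (T : UTree A) (v : ℕ → Node) (V : ℕ → Set Node), ∀ s ∈ T.dom, ∀ t ∈ T.dom,
    (R T s t ↔ Sat T (Function.update (Function.update v 0 s) 1 t) V φ)

theorem exists_definesU_root : ∃ φ : MSO A, φ.DefinesU fun _ => {[]} :=
  ⟨allFO 1 (.desc 0 1), fun T v V s hs => by
    simp [Sat, UTree.eq_nil_iff_forall_descR hs]⟩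

theorem exists_definesU_isLeaf : ∃ φ : MSO A, φ.DefinesU fun T => {s | T.isLeaf s} :=
  ⟨allFO 1 (.imp (.desc 0 1) (.eq 1 0)), fun T v V s hs => by
    simp [Sat, UTree.isLeaf_iff_forall_descR hs]⟩

theorem exists_definesU_isLast_and_ne_nil :
    ∃ φ : MSO A, φ.DefinesU fun T => {s | T.isLast s ∧ s ≠ []} :=
  ⟨.and (allFO 1 (.imp (.sib 0 1) (.eq 1 0))) (.not (allFO 1 (.desc 0 1))), fun T v V s hs => by
    simp [Sat, UTree.isLast_iff_forall_sibR hs, UTree.eq_nil_iff_forall_descR hs]⟩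

theorem exists_definesBinary_firstChildR : ∃ φ : MSO A, φ.DefinesBinary UTree.firstChildR :=
  ⟨.and (.desc 0 1) (.and (.not (.eq 0 1)) (allFO 2 (.and
      (.imp (.desc 0 2) (.imp (.desc 2 1) (.or (.eq 2 0) (.eq 2 1))))
      (.imp (.sib 2 1) (.eq 2 1))))),
    fun T v V s _ t _ => by simp [Sat, UTree.firstChildR_iff_descR_sibR]⟩

theorem exists_definesBinary_nsR : ∃ φ : MSO A, φ.DefinesBinary UTree.nsR :=
  ⟨.and (.sib 0 1) (.and (.not (.eq 0 1)) (allFO 2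
      (.imp (.sib 0 2) (.imp (.sib 2 1) (.or (.eq 2 0) (.eq 2 1)))))),
    fun T v V s _ t _ => by simp [Sat, UTree.nsR_iff_sibR]⟩

/-- The set variable that holds the nodes of colour `p`. -/
noncomputable def colourVar [Finite P] (p : P) : ℕ := Finite.equivFin P p

/-- `φ` expresses the property `C` of colourings `σ` of the nodes by the elements of `P`, the nodes
of colour `p` being given to `φ` as the value of the set variable `colourVar p`. -/
def DefinesColouring [Finite P] (φ : MSO A) (C : UTree A → (Node → P) → Prop) : Prop :=
  ∀ (T : UTree A) (v : ℕ → Node) (V : ℕ → Set Node) (σ : Node → P),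
    (∀ s ∈ T.dom, ∀ p, s ∈ V (colourVar p) ↔ σ s = p) → (C T σ ↔ Sat T v V φ)

/-- The property `C` of colourings can be expressed in MSO. -/
def ColouringDefinable [Finite P] (C : UTree A → (Node → P) → Prop) : Prop :=
  ∃ φ : MSO A, φ.DefinesColouring C

namespace ColouringDefinable

variable [Finite P] {C C' : UTree A → (Node → P) → Prop}

theorem and : ColouringDefinable C → ColouringDefinable C' →
    ColouringDefinable fun T σ => C T σ ∧ C' T σ :=
  fun ⟨φ, hφ⟩ ⟨φ', hφ'⟩ => ⟨φ.and φ', fun T v V σ hσ => and_congr (hφ T v V σ hσ) (hφ' T v V σ hσ)⟩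

theorem forall_node [Finite A] {ψ : MSO A} {Q : UTree A → Set Node} (hψ : ψ.DefinesU Q)
    (ok : A → P → Prop) :
    ColouringDefinable fun T σ => ∀ s ∈ T.dom, s ∈ Q T → ok (T.label s) (σ s) := by
  refine ⟨allFO 0 (.imp ψ (.any fun x : {x : A × P // ok x.1 x.2} =>
    .and (.lab x.1.1 0) (.mem (colourVar x.1.2) 0))), fun T v V σ hσ => ?_⟩
  simp only [sat_allFO, sat_imp, sat_any]
  refine forall₂_congr fun s hs => imp_congr (hψ T v V s hs) ?_
  simp [Sat, hs, hσ s hs]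

theorem forall_pair [Finite A] {ψ : MSO A} {R : UTree A → Node → Node → Prop}
    (hψ : ψ.DefinesBinary R) (ok : A → P → P → Prop) :
    ColouringDefinable fun T σ =>
      ∀ s ∈ T.dom, ∀ t ∈ T.dom, R T s t → ok (T.label s) (σ s) (σ t) := by
  refine ⟨allFO 0 (allFO 1 (.imp ψ (.any fun x : {x : A × P × P // ok x.1 x.2.1 x.2.2} =>
    .and (.lab x.1.1 0) (.and (.mem (colourVar x.1.2.1) 0) (.mem (colourVar x.1.2.2) 1))))),
    fun T v V σ hσ => ?_⟩
  simp only [sat_allFO, sat_imp, sat_any]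
  refine forall₂_congr fun s hs => forall₂_congr fun t ht =>
    imp_congr (hψ T v V s hs t ht) ?_
  simp [Sat, hs, hσ s hs, hσ t ht]

theorem exists_definesB (hC : ColouringDefinable C) :
    ∃ φ : MSO A, φ.DefinesB {T | ∃ σ, C T σ} := by
  classical
  obtain ⟨φ, hφ⟩ := hC
  let partition : MSO A := allFO 0 (.any fun p : P => .all fun p' : P =>
    if p = p' then .mem (colourVar p') 0 else .not (.mem (colourVar p') 0))
  have hpartition : ∀ T v V, Sat T v V partition ↔
      ∀ s ∈ T.dom, ∃ p : P, ∀ p', s ∈ V (colourVar p') ↔ p = p' := by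
    intro T v V
    simp only [partition, sat_allFO, sat_any, sat_all]
    refine forall₂_congr fun s _ => exists_congr fun p => forall_congr' fun p' => ?_
    split_ifs with h <;> simp [Sat, h]
  refine ⟨exSOs (Nat.card P) (.and partition φ), fun T v V => ?_⟩
  rw [sat_exSOs]
  constructor
  · rintro ⟨σ, hσ⟩
    let W (i : ℕ) : Set Node :=
      if i < Nat.card P then {s | s ∈ T.dom ∧ colourVar (σ s) = i} else V i
    have hW : ∀ s ∈ T.dom, ∀ p, s ∈ W (colourVar p) ↔ σ s = p := by
      intro s hs p
      simp [W, colourVar, hs, Fin.val_inj]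
    refine ⟨W, fun i hi => ?_, fun i hi => if_neg hi.not_gt, ?_, (hφ T v W σ hW).1 hσ⟩
    · simp only [W, if_pos hi]
      exact fun s hs => hs.1
    · exact (hpartition T v W).2 fun s hs => ⟨σ s, hW s hs⟩
  · rintro ⟨W, -, -, hW, hsat⟩
    rw [hpartition] at hW
    have : Nonempty P := (hW [] T.nil_mem).nonempty
    choose! σ hσ using hW
    exact ⟨σ, (hφ T v W σ hσ).2 hsat⟩

end ColouringDefinable

end MSO

/-! ### From nondeterministic tree automata to formulas -/

namespace NUTA

variable {A : Type} (N : NUTA A)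

/-- The left quotients of the horizontal languages of `N`; they act as the states of the
deterministic automata of these languages. -/
def quotients : Set (Language N.Q) :=
  ⋃ x : N.Q × A, Set.range (N.δ x.1 x.2).matches'.leftQuotient

theorem finite_quotients [Finite A] : N.quotients.Finite := by
  have := N.fintype_Q
  exact Set.finite_iUnion fun x => (isRegular_matches' _).finite_range_leftQuotient

/-- A run of `N` on `T` made locally verifiable: besides its state, every node carries the language
in which the states of the node and of its right siblings have to form a word. -/
structure IsColouring (T : UTree A) (σ : Node → N.Q × N.quotients) : Prop where
  root : (σ []).1 ∈ N.F
  leaf : ∀ s ∈ T.dom, T.isLeaf s → [] ∈ (N.δ (σ s).1 (T.label s)).matches'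
  firstChild : ∀ s ∈ T.dom, ∀ t ∈ T.dom, T.firstChildR s t →
    (σ t).2.1 = (N.δ (σ s).1 (T.label s)).matches'
  nextSibling : ∀ s ∈ T.dom, ∀ t ∈ T.dom, T.nsR s t →
    (σ t).2.1 = (σ s).2.1.leftQuotient [(σ s).1]
  last : ∀ s ∈ T.dom, T.isLast s ∧ s ≠ [] → [(σ s).1] ∈ (σ s).2.1

variable {N} {T : UTree A} {σ : Node → N.Q × N.quotients}

theorem IsColouring.accepts (hσ : N.IsColouring T σ) : N.Accepts T := by
  have hword : ∀ u i, u ++ [i] ∈ T.dom →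
      (T.childrenFrom u i).map (fun s => (σ s).1) ∈ (σ (u ++ [i])).2.1 := by
    intro u i
    induction u, i using T.forest_induction with
    | empty u i h => exact fun hi => absurd hi h
    | node u i h _ ih =>
      intro _
      rw [UTree.childrenFrom_of_mem h, List.map_cons]
      by_cases h' : u ++ [i + 1] ∈ T.dom
      · have hnext := ih h'
        rwa [hσ.nextSibling _ h _ h' ⟨h, h', u, i, rfl, rfl⟩] at hnext
      · rw [UTree.childrenFrom_of_notMem h']
        exact hσ.last _ h ⟨.inr ⟨u, i, rfl, h'⟩, by simp⟩
  refine ⟨fun s => (σ s).1, fun s hs => ?_, hσ.root⟩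
  rw [← UTree.childrenFrom_zero]
  by_cases h : s ++ [0] ∈ T.dom
  · rw [← hσ.firstChild s hs _ h ⟨hs, h, rfl⟩]
    exact hword s 0 h
  · rw [UTree.childrenFrom_of_notMem h]
    exact hσ.leaf s hs ⟨hs, fun i hi => h (UTree.child_mem_of_le hi i.zero_le)⟩

/-- What remains of the horizontal language at `u` after the states of its first `i` children. -/
def residual (N : NUTA A) (T : UTree A) (ρ : Node → N.Q) (u : Node) (i : ℕ) : N.quotients :=
  ⟨(N.δ (ρ u) (T.label u)).matches'.leftQuotient ((List.range i).map fun j => ρ (u ++ [j])),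
    Set.mem_iUnion.2 ⟨(ρ u, T.label u), _, rfl⟩⟩

/-- The colouring of a run; the language attached to the root is junk. -/
def runColouring (N : NUTA A) (T : UTree A) (ρ : Node → N.Q) (s : Node) : N.Q × N.quotients :=
  (ρ s, N.residual T ρ s.dropLast (s.getLast?.getD 0))

theorem runColouring_child (ρ : Node → N.Q) (u : Node) (i : ℕ) :
    N.runColouring T ρ (u ++ [i]) = (ρ (u ++ [i]), N.residual T ρ u i) := by
  simp [runColouring]

theorem residual_succ (ρ : Node → N.Q) (u : Node) (i : ℕ) :
    (N.residual T ρ u (i + 1)).1 = (N.residual T ρ u i).1.leftQuotient [ρ (u ++ [i])] := by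
  simp [residual, List.range_succ, Language.leftQuotient_append]

theorem IsRun.isColouring {ρ : Node → N.Q} (hρ : N.IsRun T ρ) (hF : ρ [] ∈ N.F) :
    N.IsColouring T (N.runColouring T ρ) where
  root := hF
  leaf s hs hleaf := by
    have hcount : T.childCount s = 0 := by
      simpa [UTree.mem_dom_iff_lt_childCount] using hleaf.2 0
    simpa [UTree.childrenList, hcount, runColouring] using hρ s hs
  firstChild := by
    rintro s - _ - ⟨-, -, rfl⟩
    rw [runColouring_child]
    rfl
  nextSibling := by
    rintro _ - _ - ⟨-, -, u, i, rfl, rfl⟩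
    simp only [runColouring_child, residual_succ]
  last := by
    rintro s hs ⟨hlast, hne⟩
    obtain ⟨u, i, rfl, hi⟩ := hlast.resolve_left hne
    have hu : u ∈ T.dom := T.prefix_closed hs (List.prefix_append u [i])
    have hcount : T.childCount u = i + 1 := by
      rw [UTree.mem_dom_iff_lt_childCount] at hs hi
      lia
    rw [runColouring_child]
    simpa [UTree.childrenList, hcount, List.range_succ, residual, Function.comp_def] using hρ u hu

theorem accepts_iff_exists_isColouring : N.Accepts T ↔ ∃ σ, N.IsColouring T σ :=
  ⟨fun ⟨_, hρ, hF⟩ => ⟨_, hρ.isColouring hF⟩, fun ⟨_, hσ⟩ => hσ.accepts⟩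

theorem colouringDefinable_isColouring [Finite A] [Finite N.Q] [Finite N.quotients] :
    MSO.ColouringDefinable N.IsColouring := by
  obtain ⟨_, hroot⟩ := MSO.exists_definesU_root (A := A)
  obtain ⟨_, hleaf⟩ := MSO.exists_definesU_isLeaf (A := A)
  obtain ⟨_, hfirst⟩ := MSO.exists_definesBinary_firstChildR (A := A)
  obtain ⟨_, hnext⟩ := MSO.exists_definesBinary_nsR (A := A)
  obtain ⟨_, hlast⟩ := MSO.exists_definesU_isLast_and_ne_nil (A := A)
  have hfields := (MSO.ColouringDefinable.forall_node hroot
        fun _ (p : N.Q × N.quotients) => p.1 ∈ N.F).and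
    (.and (.forall_node hleaf fun a p => [] ∈ (N.δ p.1 a).matches')
      (.and (.forall_pair hfirst fun a p p' => p'.2.1 = (N.δ p.1 a).matches')
        (.and (.forall_pair hnext fun _ p p' => p'.2.1 = p.2.1.leftQuotient [p.1])
          (.forall_node hlast fun _ p => [p.1] ∈ p.2.1))))
  convert hfields using 3 with T σ
  constructor
  · rintro ⟨root, leaf, first, next, last⟩
    exact ⟨fun _ _ hs => hs ▸ root, leaf, first, next, last⟩
  · rintro ⟨root, leaf, first, next, last⟩
    exact ⟨root [] T.nil_mem rfl, leaf, first, next, last⟩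

theorem exists_definesB_accepts [Finite A] (N : NUTA A) :
    ∃ φ : MSO A, φ.DefinesB {T | N.Accepts T} := by
  have := N.fintype_Q
  have : Finite N.quotients := N.finite_quotients
  simp only [accepts_iff_exists_isColouring]
  exact colouringDefinable_isColouring.exists_definesB

end NUTA

/-- A set of ordered unranked Σ-trees is regular (the language
of some nondeterministic unranked tree automaton) iff it is definable by an
MSO sentence. -/
theorem regular_iff_mso_definable (A : Type) [Fintype A] (L : Set (UTree A)) :
    RegularLang L ↔ ∃ φ : MSO A, φ.DefinesB L := by
  constructor
  · rintro ⟨N, hN⟩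
    obtain rfl : {T | N.Accepts T} = L := Set.ext hN
    exact N.exists_definesB_accepts
  · rintro ⟨φ, hφ⟩
    exact hφ.recognizable.regularLang

end UnrankedTrees
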